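/- In a nonlinear model (p_k ≠ k/m for some 0 ≤ k ≤ m) with X_0 > 0 and Y_0 > 0, if z ∈ Z_P ∩ (0,1) is a stable zero, i.e., there exists ε > 0 such that P > 0 on (z−ε, z) and P < 0 on (z, z+ε), then P(lim_{n→∞} a_n = z) > 0. -/

import Mathlib

open MeasureTheory ProbabilityTheory Filter Set

noncomputable section

/-- The polynomial `P(z) = (1/2) ∑_{k=0}^m C(m,k) z^k (1-z)^{m-k} (p_k - k/m)`. -/
def polyP (m : ℕ) (p : ℕ → ℝ) (z : ℝ) : ℝ :=
  (1 / 2) * ∑ k ∈ Finset.range (m + 1),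
    (m.choose k : ℝ) * z ^ k * (1 - z) ^ (m - k) * (p k - (k : ℝ) / m)

/-- The zero set `Z_P = {z ∈ [0,1] : P(z) = 0}`. -/
def zeroSetP (m : ℕ) (p : ℕ → ℝ) : Set ℝ :=
  {z ∈ Set.Icc (0 : ℝ) 1 | polyP m p z = 0}

/-- The two-type preferential attachment process with `m` edges per new node and type
adoption parameters `p 0, …, p m`, defined on a probability space `(Ω, μ)` with filtration
`F`.  `A n` is the number of red nodes and `X n` the sum of the degrees of red nodes at time
`n`; the transition probabilities given `F n` are those of the model: a number `k` of red
neighbours is drawn from the `Binomial(m, x_n)` distribution, and then the new node is red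
with probability `p k` (adding `1` to the red nodes and `k + m` to the red degrees) and blue
with probability `1 - p k` (adding `k` to the red degrees). -/
structure PAProcess (Ω : Type) [MeasurableSpace Ω] where
  μ : Measure Ω
  isProb : IsProbabilityMeasure μ
  m : ℕ
  hm : 1 ≤ m
  p : ℕ → ℝ
  hp : ∀ k ≤ m, p k ∈ Set.Icc (0 : ℝ) 1
  A : ℕ → Ω → ℕ
  X : ℕ → Ω → ℕ
  F : Filtration ℕ ‹MeasurableSpace Ω›
  A0 : ℕ
  B0 : ℕ
  X0 : ℕ
  Y0 : ℕ
  hA0 : ∀ ω, A 0 ω = A0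
  hX0 : ∀ ω, X 0 ω = X0
  adaptedA : ∀ n, Measurable[F n] (A n)
  adaptedX : ∀ n, Measurable[F n] (X n)
  hXle : ∀ n ω, X n ω ≤ X0 + Y0 + 2 * m * n
  step_red : ∀ n, ∀ k ≤ m,
    μ[Set.indicator {ω | A (n + 1) ω = A n ω + 1 ∧ X (n + 1) ω = X n ω + k + m}
        (fun _ => (1 : ℝ)) | F n]
      =ᵐ[μ] fun ω => (m.choose k : ℝ) *
        ((X n ω : ℝ) / ((X0 : ℝ) + Y0 + 2 * m * n)) ^ k *
        (1 - (X n ω : ℝ) / ((X0 : ℝ) + Y0 + 2 * m * n)) ^ (m - k) * p k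
  step_blue : ∀ n, ∀ k ≤ m,
    μ[Set.indicator {ω | A (n + 1) ω = A n ω ∧ X (n + 1) ω = X n ω + k}
        (fun _ => (1 : ℝ)) | F n]
      =ᵐ[μ] fun ω => (m.choose k : ℝ) *
        ((X n ω : ℝ) / ((X0 : ℝ) + Y0 + 2 * m * n)) ^ k *
        (1 - (X n ω : ℝ) / ((X0 : ℝ) + Y0 + 2 * m * n)) ^ (m - k) * (1 - p k)

namespace PAProcess

variable {Ω : Type} [MeasurableSpace Ω] (P : PAProcess Ω)

/-- Total degree `S_n = S_0 + 2mn`. -/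
def S (n : ℕ) : ℕ := P.X0 + P.Y0 + 2 * P.m * n

/-- Normalized red degree `x_n = X_n / S_n`. -/
def x (n : ℕ) (ω : Ω) : ℝ := (P.X n ω : ℝ) / (P.S n : ℝ)

/-- Normalized red node count `a_n = A_n / (A_0 + B_0 + n)`. -/
def a (n : ℕ) (ω : Ω) : ℝ := (P.A n ω : ℝ) / ((P.A0 : ℝ) + P.B0 + n)

/-- The polynomial `P` of the process. -/
def poly : ℝ → ℝ := polyP P.m P.p

/-- The zero set `Z_P` of the process. -/
def Zp : Set ℝ := zeroSetP P.m P.p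

end PAProcess

theorem sa_det {V d b T : ℕ → ℝ} {t : ℝ} (hV : ∀ n, 0 ≤ V n) (hd : ∀ n, 0 ≤ d n)
    (hb : ∀ n, 0 ≤ b n)
    (hbs : Summable b) (hT : Tendsto T atTop (nhds t))
    (h : ∀ n, V (n+1) = V n - d n + b n + (T (n+1) - T n)) :
    (∃ L, Tendsto V atTop (nhds L)) ∧ Summable d := by
  have key : ∀ n, V n = V 0 - ∑ i ∈ Finset.range n, d i + ∑ i ∈ Finset.range n, b i
      + (T n - T 0) := by
    intro n
    induction n with
    | zero => simp
    | succ n ih => rw [h, Finset.sum_range_succ, Finset.sum_range_succ]; linarith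
  obtain ⟨K, hK⟩ := hT.bddAbove_range
  have hds : Summable d := by
    refine summable_of_sum_range_le (c := V 0 + ∑' i, b i + (K - T 0)) hd fun n => ?_
    have h1 := key n
    have h2 := hV n
    have h3 : T n ≤ K := hK ⟨n, rfl⟩
    have h4 : ∑ i ∈ Finset.range n, b i ≤ ∑' i, b i := hbs.sum_le_tsum _ (fun i _ => hb i)
    linarith
  refine ⟨⟨V 0 - ∑' i, d i + ∑' i, b i + (t - T 0), ?_⟩, hds⟩
  refine Tendsto.congr (fun n => (key n).symm) ?_
  exact ((tendsto_const_nhds.sub hds.hasSum.tendsto_sum_nat).add hbs.hasSum.tendsto_sum_nat).add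
    (hT.sub_const _)

/-- Deterministic convergence. -/
theorem sa_det2 {y γ : ℕ → ℝ} {H : ℝ → ℝ} {z δ : ℝ} (hH : Continuous H)
    (hγ0 : ∀ n, 0 < γ n) (hγs : ¬ Summable γ)
    (hsign : ∀ u, |u - z| ≤ δ → u ≠ z → (u - z) * H u < 0)
    (hy : ∀ n, |y n - z| ≤ δ) {L : ℝ}
    (hL : Tendsto (fun n => (y n - z)^2) atTop (nhds L))
    (hs : Summable (fun n => - (2 * γ n * ((y n - z) * H (y n))))) :
    Tendsto y atTop (nhds z) := by
  have hL0 : 0 ≤ L := ge_of_tendsto' hL fun n => sq_nonneg _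
  rcases hL0.eq_or_lt with h0 | hpos
  · subst h0
    have h1 := hL.sqrt
    simp only [Real.sqrt_sq_eq_abs, Real.sqrt_zero] at h1
    have h2 := (tendsto_zero_iff_abs_tendsto_zero (fun n => y n - z)).2 h1
    simpa using h2.add_const z
  · exfalso
    let K : Set ℝ := {u | |u - z| ≤ δ ∧ L/2 ≤ (u - z)^2}
    have hKc : IsCompact K := by
      have : K = Metric.closedBall z δ ∩ {u | L/2 ≤ (u - z)^2} := by
        ext u; simp [K, Real.dist_eq]
      rw [this]
      exact (isCompact_closedBall z δ).inter_right
        (isClosed_le continuous_const (by fun_prop))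
    have hev : ∀ᶠ n in atTop, y n ∈ K := by
      filter_upwards [hL.eventually (lt_mem_nhds (show L/2 < L by linarith))] with n hn
      exact ⟨hy n, hn.le⟩
    obtain ⟨n0, hn0⟩ := hev.exists
    obtain ⟨u, huK, hu⟩ := hKc.exists_isMaxOn ⟨_, hn0⟩
      (f := fun u => (u - z) * H u) (by fun_prop)
    have hune : u ≠ z := by
      rintro rfl
      have := huK.2
      simp at this; linarith
    have hneg := hsign u huK.1 hune
    set c := -((u - z) * H u) with hc
    have hcpos : 0 < c := by linarith
    apply hγs
    have hs2 : Summable (fun n => 2 * c * γ n) := by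
      refine Summable.of_norm_bounded_eventually_nat hs ?_
      filter_upwards [hev] with n hn
      have h3 : (y n - z) * H (y n) ≤ (u - z) * H u := hu hn
      rw [Real.norm_eq_abs, abs_of_pos (by have := hγ0 n; positivity)]
      have := hγ0 n
      nlinarith
    exact (summable_mul_left_iff (by positivity)).1 hs2

theorem sa_main {Ω : Type*} [mΩ : MeasurableSpace Ω] (μ : Measure Ω) [IsProbabilityMeasure μ]
    (F : Filtration ℕ mΩ) (y ξ : ℕ → Ω → ℝ) (γ : ℕ → ℝ) (H : ℝ → ℝ) (z δ C Q : ℝ) (E : Set Ω)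
    (hδ : 0 < δ) (hy : ∀ n, Measurable[F n] (y n)) (hξm : ∀ n, Measurable[F (n+1)] (ξ n))
    (hH : Continuous H) (hγ0 : ∀ n, 0 < γ n) (hγ1 : ∀ n, γ n ≤ 1) (hγs : ¬ Summable γ)
    (hγ2 : ∀ n, ∑ i ∈ Finset.range n, (γ i)^2 ≤ Q)
    (hrec : ∀ n ω, y (n+1) ω = y n ω + γ n * (ξ n ω + H (y n ω)))
    (hξb : ∀ᵐ ω ∂μ, ∀ n, |ξ n ω| ≤ C ∧ |ξ n ω + H (y n ω)| ≤ C)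
    (hξ0 : ∀ n, μ[ξ n | F n] =ᵐ[μ] 0)
    (hsign : ∀ u, |u - z| ≤ δ → u ≠ z → (u - z) * H u < 0)
    (hE : MeasurableSet[F 0] E) (hEb : ∀ ω ∈ E, (y 0 ω - z)^2 + C^2 * Q ≤ δ^2/2) :
    (∀ᵐ ω ∂μ, ω ∈ E → (∀ n, |y n ω - z| ≤ δ) → Tendsto (fun n => y n ω) atTop (nhds z)) ∧
    (μ E ≠ 0 → μ {ω | ω ∈ E ∧ ∀ n, |y n ω - z| ≤ δ} ≠ 0) := by
  classical
  have hC : 0 ≤ C := by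
    obtain ⟨ω, h⟩ := hξb.exists
    exact (abs_nonneg _).trans (h 0).1
  let al : ℕ → Set Ω := fun n => {ω | ω ∈ E ∧ ∀ j ≤ n, |y j ω - z| ≤ δ}
  have hal : ∀ n, MeasurableSet[F n] (al n) := by
    intro n
    have : al n = E ∩ ⋂ j, ⋂ (_ : j ≤ n), {ω | |y j ω - z| ≤ δ} := by
      ext ω; simp [al]
    rw [this]
    refine MeasurableSet.inter (F.mono (Nat.zero_le n) _ hE) ?_
    refine MeasurableSet.iInter fun j => MeasurableSet.iInter fun hj => ?_
    refine F.mono hj _ ?_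
    have : Measurable[F j] (fun ω => |y j ω - z|) := by
      have := hy j
      exact continuous_abs.measurable.comp (this.sub_const z)
    exact this measurableSet_Iic
  let φ : ℕ → Ω → ℝ := fun n => (al n).indicator (fun ω => 2 * (y n ω - z) * γ n)
  have hφm : ∀ n, StronglyMeasurable[F n] (φ n) := by
    intro n
    refine StronglyMeasurable.indicator ?_ (hal n)
    exact ((((hy n).sub_const z).const_mul 2).mul_const (γ n)).stronglyMeasurable
  have hφb : ∀ n ω, |φ n ω| ≤ 2 * δ := by
    intro n ω
    by_cases h : ω ∈ al n
    · simp only [φ, indicator_of_mem h]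
      have h1 := h.2 n le_rfl
      rw [abs_mul, abs_mul, abs_of_pos (hγ0 n)]
      have := hγ0 n
      have := hγ1 n
      simp only [Nat.abs_ofNat]
      have := abs_nonneg (y n ω - z)
      nlinarith
    · simp only [φ, indicator_of_notMem h, abs_zero]; positivity
  have hξi : ∀ n, Integrable (ξ n) μ := fun n =>
    Integrable.of_bound ((hξm n).mono (F.le _) le_rfl).aestronglyMeasurable C
      (hξb.mono fun ω h => (h n).1)
  have hinci : ∀ n, Integrable (fun ω => φ n ω * ξ n ω) μ := fun n =>
    (hξi n).bdd_mul (c := 2 * δ) ((hφm n).mono (F.le n)).aestronglyMeasurable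
      (ae_of_all _ (hφb n))
  let W : ℕ → Ω → ℝ := fun n ω => ∑ j ∈ Finset.range n, φ j ω * ξ j ω
  have hWs : ∀ n ω, W (n+1) ω = W n ω + φ n ω * ξ n ω := fun n ω => Finset.sum_range_succ _ _
  have hWi : ∀ n, Integrable (W n) μ := fun n => integrable_finsetSum _ fun j _ => hinci j
  have hWm : Martingale W F μ := by
    refine martingale_of_condExp_sub_eq_zero_nat ?_ hWi ?_
    · intro n
      have : Measurable[F n] (W n) := by
        refine Finset.measurable_fun_sum _ fun j hj => ?_
        have hj' : j < n := Finset.mem_range.1 hj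
        exact ((hφm j).measurable.mono (F.mono hj'.le) le_rfl).mul
          ((hξm j).mono (F.mono hj') le_rfl)
      exact this.stronglyMeasurable
    · intro n
      have h1 : W (n+1) - W n = φ n * ξ n := by
        ext ω; simp [hWs]
      rw [h1]
      have h2 := condExp_mul_of_stronglyMeasurable_left (μ := μ) (hφm n) (hinci n) (hξi n)
      refine h2.trans ?_
      filter_upwards [hξ0 n] with ω h
      simp [h]
  have hWd : ∀ᵐ ω ∂μ, ∀ n, |W (n+1) ω - W n ω| ≤ ((2 * δ * C).toNNReal : ℝ) := by
    filter_upwards [hξb] with ω h n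
    rw [hWs, add_sub_cancel_left, abs_mul, Real.coe_toNNReal _ (by positivity)]
    exact mul_le_mul (hφb n ω) (h n).1 (abs_nonneg _) (by positivity)
  -- lower bound
  have hlow : ∀ᵐ ω ∂μ, ω ∈ E → ∀ n, (if ω ∈ al n then (y n ω - z)^2 else δ^2)
      - (y 0 ω - z)^2 - C^2 * ∑ i ∈ Finset.range n, (γ i)^2 ≤ W n ω := by
    filter_upwards [hξb] with ω hb hω n
    have hQ : 0 ≤ Q := (by simpa using hγ2 0)
    induction n with
    | zero =>
      have : ω ∈ al 0 := by
        refine ⟨hω, fun j hj => ?_⟩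
        obtain rfl : j = 0 := by omega
        have := hEb ω hω
        refine abs_le_of_sq_le_sq ?_ hδ.le
        nlinarith [mul_nonneg (sq_nonneg C) hQ, sq_nonneg δ]
      simp [this, W]
    | succ n ih =>
      rw [hWs, Finset.sum_range_succ]
      by_cases hn : ω ∈ al n
      · rw [if_pos hn] at ih
        simp only [φ, indicator_of_mem hn]
        have hV : (y (n+1) ω - z)^2 ≤ (y n ω - z)^2 + 2 * (y n ω - z) * γ n * ξ n ω
            + C^2 * γ n ^2 := by
          rw [hrec]
          have h1 : (y n ω - z) * H (y n ω) ≤ 0 := by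
            by_cases hz : y n ω = z
            · simp [hz]
            · exact (hsign _ (hn.2 n le_rfl) hz).le
          have h2 : (ξ n ω + H (y n ω))^2 ≤ C^2 := sq_le_sq' (abs_le.1 (hb n).2).1 (abs_le.1 (hb n).2).2
          have h3 := mul_le_mul_of_nonneg_left h2 (sq_nonneg (γ n))
          have h4 := mul_nonneg (hγ0 n).le (neg_nonneg.2 h1)
          nlinarith
        by_cases hn1 : ω ∈ al (n+1)
        · rw [if_pos hn1]; linarith
        · rw [if_neg hn1]
          have : ¬ |y (n+1) ω - z| ≤ δ := by
            intro h
            apply hn1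
            refine ⟨hω, fun j hj => ?_⟩
            rcases Nat.lt_or_ge j (n+1) with h' | h'
            · exact hn.2 j (by omega)
            · obtain rfl : j = n + 1 := by omega
              exact h
          push Not at this
          have h5 : δ^2 ≤ (y (n+1) ω - z)^2 := by
            rw [← sq_abs (y (n+1) ω - z)]
            exact pow_le_pow_left₀ hδ.le this.le 2
          linarith
      · have hn1 : ω ∉ al (n+1) := fun h => hn ⟨h.1, fun j hj => h.2 j (by omega)⟩
        rw [if_neg hn] at ih
        rw [if_neg hn1]
        simp only [φ, indicator_of_notMem hn]
        nlinarith [mul_nonneg (sq_nonneg C) (sq_nonneg (γ n))]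
  have hlow2 : ∀ᵐ ω ∂μ, ω ∈ E → ∀ n, (if ω ∈ al n then 0 else δ^2) - δ^2/2 ≤ W n ω := by
    filter_upwards [hlow] with ω h hω n
    refine le_trans ?_ (h hω n)
    have h1 := hEb ω hω
    have h2 := mul_le_mul_of_nonneg_left (hγ2 n) (sq_nonneg C)
    have h3 : (if ω ∈ al n then (0:ℝ) else δ^2) ≤ (if ω ∈ al n then (y n ω - z)^2 else δ^2) := by
      split_ifs
      · positivity
      · exact le_rfl
    linarith
  constructor
  · have hconv := (hWm.neg.submartingale).bddAbove_iff_exists_tendsto (R := (2 * δ * C).toNNReal)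
      (by
        filter_upwards [hWd] with ω h n
        have := h n
        rw [abs_sub_comm] at this
        simp only [Pi.neg_apply]
        rwa [show -W (n+1) ω - -W n ω = W n ω - W (n+1) ω by ring])
    filter_upwards [hconv, hlow2, hξb] with ω hc hl hb hω hall
    have hbd : BddAbove (Set.range fun n => (-W) n ω) := by
      refine ⟨δ^2/2, ?_⟩
      rintro _ ⟨n, rfl⟩
      have := hl hω n
      have h0 : (0:ℝ) ≤ (if ω ∈ al n then 0 else δ^2) := by split_ifs <;> positivity
      simp only [Pi.neg_apply]
      linarith
    obtain ⟨c, hc⟩ := hc.1 hbd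
    have hT : Tendsto (fun n => W n ω) atTop (nhds (-c)) := by
      simpa using hc.neg
    have hmem : ∀ n, ω ∈ al n := fun n => ⟨hω, fun j _ => hall j⟩
    have hs2 : Summable (fun n => (γ n)^2) :=
      summable_of_sum_range_le (fun n => sq_nonneg _) hγ2
    obtain ⟨⟨L, hL⟩, hds⟩ := sa_det (V := fun n => (y n ω - z)^2)
      (d := fun n => - (2 * γ n * ((y n ω - z) * H (y n ω))))
      (b := fun n => (γ n * (ξ n ω + H (y n ω)))^2)
      (T := fun n => W n ω) (t := -c) (fun n => sq_nonneg _)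
      (fun n => by
        have h1 : (y n ω - z) * H (y n ω) ≤ 0 := by
          by_cases hz : y n ω = z
          · simp [hz]
          · exact (hsign _ (hall n) hz).le
        have := hγ0 n
        nlinarith) (fun n => sq_nonneg _)
      (by
        refine Summable.of_nonneg_of_le (fun n => sq_nonneg _) (fun n => ?_) (hs2.mul_left (C^2))
        have h2 : (ξ n ω + H (y n ω))^2 ≤ C^2 := sq_le_sq' (abs_le.1 (hb n).2).1 (abs_le.1 (hb n).2).2
        have h3 := mul_le_mul_of_nonneg_left h2 (sq_nonneg (γ n))
        nlinarith)
      hT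
      (fun n => by
        simp only [hWs, φ, indicator_of_mem (hmem n)]
        rw [hrec]; ring)
    exact sa_det2 hH hγ0 hγs hsign hall hL hds
  · intro hE0
    have hEm : MeasurableSet E := F.le 0 _ hE
    have halm : ∀ n, MeasurableSet (al n) := fun n => F.le n _ (hal n)
    have hge : ∀ n, μ.real E / 2 ≤ μ.real (al n) := by
      intro n
      have h0 : ∫ ω, W n ω ∂μ = 0 := by
        have h1 := hWm.setIntegral_eq (Nat.zero_le n) (s := univ) MeasurableSet.univ
        simp only [Measure.restrict_univ] at h1
        rw [← h1]; simp [W]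
      have h1 : ∫ ω, (E.indicator (fun _ => δ^2/2) ω - (al n).indicator (fun _ => δ^2) ω) ∂μ
          ≤ ∫ ω, W n ω ∂μ := by
        refine integral_mono_ae ?_ (hWi n) ?_
        · exact ((integrable_const _).indicator hEm).sub ((integrable_const _).indicator (halm n))
        · filter_upwards [hlow2] with ω h
          by_cases hω : ω ∈ E
          · have := h hω n
            by_cases ha : ω ∈ al n
            · simp only [ha, hω, indicator_of_mem, if_true] at this ⊢; linarith
            · simp only [ha, hω, indicator_of_mem, if_false, not_false_eq_true,
                indicator_of_notMem] at this ⊢; linarith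
          · have hna : ∀ j, ω ∉ al j := fun j h => hω h.1
            simp [hω, hna, W, φ]
      rw [h0, integral_sub ((integrable_const _).indicator hEm)
        ((integrable_const _).indicator (halm n)), integral_indicator_const _ hEm,
        integral_indicator_const _ (halm n)] at h1
      simp only [smul_eq_mul] at h1
      have : 0 < δ^2 := by positivity
      nlinarith
    have hint : {ω | ω ∈ E ∧ ∀ n, |y n ω - z| ≤ δ} = ⋂ n, al n := by
      ext ω
      simp only [mem_ofPred_eq, mem_iInter, al]
      exact ⟨fun h n => ⟨h.1, fun j _ => h.2 j⟩, fun h => ⟨(h 0).1, fun n => (h n).2 n le_rfl⟩⟩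
    rw [hint]
    have hlim := tendsto_measure_iInter_atTop (μ := μ) (s := al)
      (fun n => (halm n).nullMeasurableSet)
      (fun i j hij ω h => ⟨h.1, fun k hk => h.2 k (hk.trans hij)⟩) ⟨0, measure_ne_top _ _⟩
    have h2 : ENNReal.ofReal (μ.real E / 2) ≤ μ (⋂ n, al n) := by
      refine ge_of_tendsto' hlim fun n => ?_
      simp only [Function.comp]
      rw [← ofReal_measureReal (μ := μ) (s := al n)]
      exact ENNReal.ofReal_le_ofReal (hge n)
    have h3 : 0 < μ.real E := by
      rw [measureReal_def]
      exact ENNReal.toReal_pos hE0 (measure_ne_top _ _)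
    intro h4
    rw [h4] at h2
    have := ENNReal.ofReal_eq_zero.1 (le_antisymm h2 bot_le)
    linarith

def qf (m k : ℕ) (x : ℝ) : ℝ := (m.choose k : ℝ) * x ^ k * (1 - x) ^ (m - k)

theorem qf_sum (m : ℕ) (x : ℝ) : ∑ k ∈ Finset.range (m+1), qf m k x = 1 := by
  have h := congrArg (Polynomial.eval x) (bernsteinPolynomial.sum ℝ m)
  simpa [Polynomial.eval_finsetSum, bernsteinPolynomial, qf] using h

theorem qf_sum_mul (m : ℕ) (x : ℝ) : ∑ k ∈ Finset.range (m+1), qf m k x * k = m * x := by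
  have h := congrArg (Polynomial.eval x) (bernsteinPolynomial.sum_smul ℝ m)
  simp [Polynomial.eval_finsetSum, bernsteinPolynomial] at h
  rw [← h]
  refine Finset.sum_congr rfl fun k _ => ?_
  rw [qf]; ring

theorem qf_nonneg (m k : ℕ) {x : ℝ} (h0 : 0 ≤ x) (h1 : x ≤ 1) : 0 ≤ qf m k x := by
  have : 0 ≤ 1 - x := by linarith
  unfold qf; positivity

theorem qf_pos {m k : ℕ} (hk : k ≤ m) {x : ℝ} (h0 : 0 < x) (h1 : x < 1) : 0 < qf m k x := by
  have : 0 < 1 - x := by linarith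
  have := Nat.choose_pos hk
  unfold qf; positivity

theorem polyP_eq {m : ℕ} (hm : 1 ≤ m) (p : ℕ → ℝ) (x : ℝ) :
    2 * polyP m p x = ∑ k ∈ Finset.range (m+1), qf m k x * p k - x := by
  have hm' : (m:ℝ) ≠ 0 := by positivity
  have h := qf_sum_mul m x
  have h2 : ∑ k ∈ Finset.range (m+1), qf m k x * ((k:ℝ) / m) = x := by
    simp_rw [← mul_div_assoc]
    rw [← Finset.sum_div, h]; field_simp
  unfold polyP
  rw [← mul_assoc]; norm_num
  have h3 : ∑ k ∈ Finset.range (m+1), qf m k x * p k - x = ∑ k ∈ Finset.range (m+1), qf m k x * p k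
    - ∑ k ∈ Finset.range (m+1), qf m k x * ((k:ℝ) / m) := by rw [h2]
  rw [h3, ← Finset.sum_sub_distrib]
  refine Finset.sum_congr rfl fun k _ => ?_
  rw [qf]; ring

theorem polyP_continuous (m : ℕ) (p : ℕ → ℝ) : Continuous (polyP m p) := by
  unfold polyP; fun_prop

theorem polyP_bound {m : ℕ} (hm : 1 ≤ m) (p : ℕ → ℝ) (hp : ∀ k ≤ m, p k ∈ Set.Icc (0 : ℝ) 1)
    {x : ℝ} (h0 : 0 ≤ x) (h1 : x ≤ 1) : 0 ≤ 2 * polyP m p x + x ∧ 2 * polyP m p x + x ≤ 1 := by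
  rw [polyP_eq hm, sub_add_cancel]
  constructor
  · exact Finset.sum_nonneg fun k hk =>
      mul_nonneg (qf_nonneg _ _ h0 h1) (hp k (by simpa [Nat.lt_succ_iff] using hk)).1
  · rw [← qf_sum m x]
    exact Finset.sum_le_sum fun k hk =>
      mul_le_of_le_one_right (qf_nonneg _ _ h0 h1) (hp k (by simpa [Nat.lt_succ_iff] using hk)).2

namespace PAProcess

variable {Ω : Type} [MeasurableSpace Ω] (P : PAProcess Ω)

def R (n k : ℕ) : Set Ω := {ω | P.A (n + 1) ω = P.A n ω + 1 ∧ P.X (n + 1) ω = P.X n ω + k + P.m}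
def B (n k : ℕ) : Set Ω := {ω | P.A (n + 1) ω = P.A n ω ∧ P.X (n + 1) ω = P.X n ω + k}

theorem S_cast (n : ℕ) : (P.S n : ℝ) = (P.X0 : ℝ) + P.Y0 + 2 * P.m * n := by
  simp [S]

theorem condR (n k : ℕ) (hk : k ≤ P.m) :
    P.μ[(P.R n k).indicator (fun _ => (1:ℝ)) | P.F n] =ᵐ[P.μ]
      fun ω => qf P.m k (P.x n ω) * P.p k := by
  have := P.step_red n k hk
  simp only [qf, x, S_cast]
  exact this

theorem condB (n k : ℕ) (hk : k ≤ P.m) :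
    P.μ[(P.B n k).indicator (fun _ => (1:ℝ)) | P.F n] =ᵐ[P.μ]
      fun ω => qf P.m k (P.x n ω) * (1 - P.p k) := by
  have := P.step_blue n k hk
  simp only [qf, x, S_cast]
  exact this

theorem measA (n : ℕ) : Measurable (P.A n) := (P.adaptedA n).mono (P.F.le n) le_rfl
theorem measX (n : ℕ) : Measurable (P.X n) := (P.adaptedX n).mono (P.F.le n) le_rfl

theorem measR (n k : ℕ) : MeasurableSet (P.R n k) :=
  (measurableSet_eq_fun (P.measA _) ((P.measA n).add_const 1)).inter
    (measurableSet_eq_fun (P.measX _) (((P.measX n).add_const k).add_const P.m))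

theorem measB (n k : ℕ) : MeasurableSet (P.B n k) :=
  (measurableSet_eq_fun (P.measA _) (P.measA n)).inter
    (measurableSet_eq_fun (P.measX _) ((P.measX n).add_const k))

theorem measx (n : ℕ) : Measurable[P.F n] (P.x n) := by
  have h : Measurable (fun k : ℕ => (k:ℝ) / (P.S n : ℝ)) := measurable_from_top
  exact h.comp (P.adaptedX n)

theorem x_mem (n : ℕ) (ω : Ω) : 0 ≤ P.x n ω ∧ P.x n ω ≤ 1 := by
  unfold x
  refine ⟨by positivity, div_le_one_of_le₀ ?_ (by positivity)⟩
  exact_mod_cast P.hXle n ω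

theorem setR (n k : ℕ) (hk : k ≤ P.m) (E : Set Ω) (hE : MeasurableSet[P.F n] E) :
    P.μ.real (E ∩ P.R n k) = ∫ ω in E, qf P.m k (P.x n ω) * P.p k ∂P.μ := by
  have := P.isProb
  rw [← setIntegral_congr_ae (f := P.μ[(P.R n k).indicator (fun _ => (1:ℝ)) | P.F n])
    (P.F.le n _ hE) ((P.condR n k hk).mono fun ω h _ => h),
    setIntegral_condExp (P.F.le n) ((integrable_const _).indicator (P.measR n k)) hE,
    setIntegral_indicator (P.measR n k)]
  simp

theorem setB (n k : ℕ) (hk : k ≤ P.m) (E : Set Ω) (hE : MeasurableSet[P.F n] E) :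
    P.μ.real (E ∩ P.B n k) = ∫ ω in E, qf P.m k (P.x n ω) * (1 - P.p k) ∂P.μ := by
  have := P.isProb
  rw [← setIntegral_congr_ae (f := P.μ[(P.B n k).indicator (fun _ => (1:ℝ)) | P.F n])
    (P.F.le n _ hE) ((P.condB n k hk).mono fun ω h _ => h),
    setIntegral_condExp (P.F.le n) ((integrable_const _).indicator (P.measB n k)) hE,
    setIntegral_indicator (P.measB n k)]
  simp

theorem int_qf (n k : ℕ) (c : ℝ) : Integrable (fun ω => qf P.m k (P.x n ω) * c) P.μ := by
  have := P.isProb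
  refine Integrable.mul_const ?_ c
  have hc : Continuous (qf P.m k) := by unfold qf; fun_prop
  obtain ⟨K, hK⟩ := (isCompact_Icc (a := (0:ℝ)) (b := 1)).exists_bound_of_continuousOn hc.continuousOn
  refine Integrable.of_bound (hc.measurable.comp
    ((P.measx n).mono (P.F.le n) le_rfl)).aestronglyMeasurable K (ae_of_all _ fun ω => ?_)
  exact hK _ (P.x_mem n ω)

theorem ae_step : ∀ᵐ ω ∂P.μ, ∀ n, ∃ k ≤ P.m, ω ∈ P.R n k ∨ ω ∈ P.B n k := by
  have := P.isProb
  rw [ae_all_iff]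
  intro n
  let UR := ⋃ k ∈ Finset.range (P.m+1), P.R n k
  let UB := ⋃ k ∈ Finset.range (P.m+1), P.B n k
  have hUR : MeasurableSet UR := Finset.measurableSet_biUnion _ fun k _ => P.measR n k
  have hUB : MeasurableSet UB := Finset.measurableSet_biUnion _ fun k _ => P.measB n k
  have h1 : P.μ.real UR = ∑ k ∈ Finset.range (P.m+1), P.μ.real (P.R n k) := by
    refine measureReal_biUnion_finset ?_ fun k _ => P.measR n k
    intro k _ k' _ hkk
    refine Set.disjoint_left.2 fun ω h h' => hkk ?_
    have := h.2; have := h'.2; omega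
  have h2 : P.μ.real UB = ∑ k ∈ Finset.range (P.m+1), P.μ.real (P.B n k) := by
    refine measureReal_biUnion_finset ?_ fun k _ => P.measB n k
    intro k _ k' _ hkk
    refine Set.disjoint_left.2 fun ω h h' => hkk ?_
    have := h.2; have := h'.2; omega
  have h3 : P.μ.real (UR ∪ UB) = P.μ.real UR + P.μ.real UB := by
    refine measureReal_union ?_ hUB (measure_ne_top _ _) (measure_ne_top _ _)
    refine Set.disjoint_left.2 fun ω h h' => ?_
    simp only [UR, UB, mem_iUnion] at h h'
    obtain ⟨_, _, h⟩ := h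
    obtain ⟨_, _, h'⟩ := h'
    have := h.1; have := h'.1; omega
  have h4 : P.μ.real (UR ∪ UB) = 1 := by
    rw [h3, h1, h2, ← Finset.sum_add_distrib]
    have : ∀ k ∈ Finset.range (P.m+1), P.μ.real (P.R n k) + P.μ.real (P.B n k)
        = ∫ ω, qf P.m k (P.x n ω) * 1 ∂P.μ := by
      intro k hk
      have hk' : k ≤ P.m := by simpa [Nat.lt_succ_iff] using hk
      have e1 := P.setR n k hk' univ MeasurableSet.univ
      have e2 := P.setB n k hk' univ MeasurableSet.univ
      rw [univ_inter, Measure.restrict_univ] at e1 e2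
      rw [e1, e2, ← integral_add (P.int_qf n k _) (P.int_qf n k _)]
      congr 1; ext ω; ring
    rw [Finset.sum_congr rfl this, ← integral_finsetSum _ (fun k _ => P.int_qf n k 1)]
    simp [qf_sum]
  have h5 : ∀ᵐ ω ∂P.μ, ω ∈ UR ∪ UB := by
    refine (mem_ae_iff_prob_eq_one (hUR.union hUB)).2 ?_
    rw [measureReal_def] at h4
    exact (ENNReal.toReal_eq_one_iff _).1 h4
  filter_upwards [h5] with ω h
  rcases h with h | h
  · simp only [UR, mem_iUnion] at h
    obtain ⟨k, hk, h⟩ := h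
    exact ⟨k, by simpa [Nat.lt_succ_iff] using hk, Or.inl h⟩
  · simp only [UB, mem_iUnion] at h
    obtain ⟨k, hk, h⟩ := h
    exact ⟨k, by simpa [Nat.lt_succ_iff] using hk, Or.inr h⟩

theorem ae_bounds : ∀ᵐ ω ∂P.μ, ∀ n, (P.A n ω ≤ P.A (n+1) ω ∧ P.A (n+1) ω ≤ P.A n ω + 1) ∧
    P.X n ω ≤ P.X (n+1) ω ∧ P.X (n+1) ω ≤ P.X n ω + 2 * P.m := by
  filter_upwards [P.ae_step] with ω h n
  obtain ⟨k, hk, h | h⟩ := h n <;> obtain ⟨h1, h2⟩ := h <;> omega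

theorem condE (n : ℕ) (r b : ℕ → ℝ) (f : Ω → ℝ)
    (hr : ∀ k ≤ P.m, ∀ ω ∈ P.R n k, f ω = r k) (hb : ∀ k ≤ P.m, ∀ ω ∈ P.B n k, f ω = b k) :
    P.μ[f | P.F n] =ᵐ[P.μ] fun ω => ∑ k ∈ Finset.range (P.m+1),
      qf P.m k (P.x n ω) * (P.p k * r k + (1 - P.p k) * b k) := by
  have := P.isProb
  have hiR : ∀ k, Integrable ((P.R n k).indicator (fun _ => (1:ℝ))) P.μ := fun k =>
    (integrable_const _).indicator (P.measR n k)
  have hiB : ∀ k, Integrable ((P.B n k).indicator (fun _ => (1:ℝ))) P.μ := fun k =>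
    (integrable_const _).indicator (P.measB n k)
  have h1 : f =ᵐ[P.μ] ∑ k ∈ Finset.range (P.m+1),
      (r k • (P.R n k).indicator (fun _ => (1:ℝ)) + b k • (P.B n k).indicator (fun _ => (1:ℝ))) := by
    filter_upwards [P.ae_step] with ω h
    obtain ⟨k, hk, h⟩ := h n
    rw [Finset.sum_apply, Finset.sum_eq_single k]
    · rcases h with h | h
      · have : ω ∉ P.B n k := by
          intro h'; have := h.1; have := h'.1; omega
        simp [h, this, hr k hk ω h]
      · have : ω ∉ P.R n k := by
          intro h'; have := h.1; have := h'.1; omega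
        simp [h, this, hb k hk ω h]
    · intro k' _ hkk
      have n1 : ω ∉ P.R n k' := by
        intro h'
        rcases h with h | h <;> have := h.1 <;> have := h.2 <;> have := h'.1 <;> have := h'.2 <;>
          omega
      have n2 : ω ∉ P.B n k' := by
        intro h'
        rcases h with h | h <;> have := h.1 <;> have := h.2 <;> have := h'.1 <;> have := h'.2 <;>
          omega
      simp [n1, n2]
    · intro h'
      exact absurd (Finset.mem_range.2 (by omega)) h'
  refine (condExp_congr_ae h1).trans ?_
  refine (condExp_finsetSum (fun k _ => ((hiR k).smul (r k)).add ((hiB k).smul (b k))) _).trans ?_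
  have h2 : ∀ᵐ ω ∂P.μ, ∀ k ∈ Finset.range (P.m+1),
      P.μ[(r k • (P.R n k).indicator (fun _ => (1:ℝ)) + b k • (P.B n k).indicator
        (fun _ => (1:ℝ)))|P.F n] ω = qf P.m k (P.x n ω) * (P.p k * r k + (1 - P.p k) * b k) := by
    rw [eventually_all_finset]
    intro k hk
    have hk' : k ≤ P.m := by simpa [Nat.lt_succ_iff] using hk
    filter_upwards [condExp_add ((hiR k).smul (r k)) ((hiB k).smul (b k)) (P.F n),
      condExp_smul (μ := P.μ) (r k) ((P.R n k).indicator (fun _ => (1:ℝ))) (P.F n),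
      condExp_smul (μ := P.μ) (b k) ((P.B n k).indicator (fun _ => (1:ℝ))) (P.F n),
      P.condR n k hk', P.condB n k hk'] with ω e1 e2 e3 e4 e5
    rw [e1, Pi.add_apply, e2, e3, Pi.smul_apply, Pi.smul_apply, e4, e5, smul_eq_mul, smul_eq_mul]
    ring
  filter_upwards [h2] with ω h
  rw [Finset.sum_apply]
  exact Finset.sum_congr rfl h

theorem condA (n : ℕ) : P.μ[fun ω => (P.A (n+1) ω : ℝ) - P.A n ω | P.F n] =ᵐ[P.μ]
    fun ω => 2 * P.poly (P.x n ω) + P.x n ω := by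
  refine (P.condE n (fun _ => 1) (fun _ => 0) _ ?_ ?_).trans ?_
  · intro k _ ω h; rw [h.1]; push_cast; ring
  · intro k _ ω h; rw [h.1]; ring
  · refine ae_of_all _ fun ω => ?_
    simp only [poly]
    rw [polyP_eq P.hm, sub_add_cancel]
    refine Finset.sum_congr rfl fun k _ => ?_
    ring

theorem mean_id (p : ℕ → ℝ) {m : ℕ} (hm : 1 ≤ m) (x : ℝ) :
    ∑ k ∈ Finset.range (m+1), qf m k x * (p k * (k + m) + (1 - p k) * k)
      = 2 * m * polyP m p x + 2 * m * x := by
  have h1 := polyP_eq hm p x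
  have h2 := qf_sum_mul m x
  have : ∀ k ∈ Finset.range (m+1), qf m k x * (p k * (k + m) + (1 - p k) * k)
      = qf m k x * k + m * (qf m k x * p k) := fun k _ => by ring
  rw [Finset.sum_congr rfl this, Finset.sum_add_distrib, ← Finset.mul_sum, h2]
  linear_combination (-(m:ℝ)) * h1

theorem condX (n : ℕ) : P.μ[fun ω => (P.X (n+1) ω : ℝ) - P.X n ω | P.F n] =ᵐ[P.μ]
    fun ω => 2 * P.m * P.poly (P.x n ω) + 2 * P.m * P.x n ω := by
  refine (P.condE n (fun k => k + P.m) (fun k => k) _ ?_ ?_).trans ?_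
  · intro k _ ω h; rw [h.2]; push_cast; ring
  · intro k _ ω h; rw [h.2]; push_cast; ring
  · exact ae_of_all _ fun ω => mean_id _ P.hm _

end PAProcess

namespace PAProcess

variable {Ω : Type} [MeasurableSpace Ω] (P : PAProcess Ω)

theorem S_pos (hX0 : 0 < P.X0) (n : ℕ) : (0:ℝ) < P.S n := by
  have : 0 < P.S n := by unfold S; omega
  exact_mod_cast this

theorem ae_x (hX0 : 0 < P.X0) (hY0 : 0 < P.Y0) :
    ∀ᵐ ω ∂P.μ, ∀ n, 0 < P.x n ω ∧ P.x n ω < 1 := by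
  filter_upwards [P.ae_bounds] with ω h n
  have h1 : P.X0 ≤ P.X n ω ∧ P.X n ω + P.Y0 ≤ P.S n := by
    induction n with
    | zero => simp [P.hX0, S]
    | succ n ih =>
      have := (h n).2
      have e : P.S (n+1) = P.S n + 2 * P.m := by unfold S; ring
      omega
  have hS := P.S_pos hX0 n
  unfold x
  refine ⟨div_pos ?_ hS, (div_lt_one hS).2 ?_⟩
  · exact_mod_cast hX0.trans_le h1.1
  · have : P.X n ω < P.S n := by omega
    exact_mod_cast this

def Poss (i : ℕ) : Prop := ∀ n, ∀ E : Set Ω, MeasurableSet[P.F n] E → P.μ E ≠ 0 →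
  P.μ (E ∩ {ω | P.X (n+1) ω = P.X n ω + i}) ≠ 0

theorem poss_aux (hX0 : 0 < P.X0) (hY0 : 0 < P.Y0) (n k : ℕ) (hk : k ≤ P.m) (c : ℝ) (hc : 0 < c)
    (E : Set Ω) (h0 : P.μ E ≠ 0)
    (hint : ∫ ω in E, qf P.m k (P.x n ω) * c ∂P.μ = 0) : False := by
  have hpos : ∀ᵐ ω ∂P.μ, 0 < qf P.m k (P.x n ω) * c := by
    filter_upwards [P.ae_x hX0 hY0] with ω h
    exact mul_pos (qf_pos hk (h n).1 (h n).2) hc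
  have h1 := (setIntegral_eq_zero_iff_of_nonneg_ae
    (ae_restrict_of_ae (hpos.mono fun ω h => h.le)) (P.int_qf n k c).integrableOn).1 hint
  have h2 : ∀ᵐ ω ∂(P.μ.restrict E), False := by
    filter_upwards [h1, ae_restrict_of_ae hpos] with ω h h'
    simp only [Pi.zero_apply] at h
    exact h'.ne' h
  rw [ae_iff] at h2
  simp at h2
  exact h0 h2

theorem possR (hX0 : 0 < P.X0) (hY0 : 0 < P.Y0) (k : ℕ) (hk : k ≤ P.m) (hp : 0 < P.p k) :
    P.Poss (k + P.m) := by
  have := P.isProb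
  intro n E hE h0 h
  refine P.poss_aux hX0 hY0 n k hk _ hp E h0 ?_
  rw [← P.setR n k hk E hE, measureReal_def,
    measure_mono_null (inter_subset_inter_right E (fun ω hω => ?_)) h]
  · simp
  · have := hω.2
    show P.X (n+1) ω = P.X n ω + (k + P.m)
    omega

theorem possB (hX0 : 0 < P.X0) (hY0 : 0 < P.Y0) (k : ℕ) (hk : k ≤ P.m) (hp : P.p k < 1) :
    P.Poss k := by
  have := P.isProb
  intro n E hE h0 h
  refine P.poss_aux hX0 hY0 n k hk (1 - P.p k) (by linarith) E h0 ?_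
  rw [← P.setB n k hk E hE, measureReal_def,
    measure_mono_null (inter_subset_inter_right E (fun ω hω => ?_)) h]
  · simp
  · exact hω.2

theorem poss_sum (z : ℝ) (hz : P.poly z = 0) :
    ∑ k ∈ Finset.range (P.m+1), qf P.m k z * (P.p k * (k + P.m - 2 * P.m * z)
      + (1 - P.p k) * (k - 2 * P.m * z)) = 0 := by
  have h1 := mean_id P.p P.hm z
  have h2 := qf_sum P.m z
  have : ∀ k ∈ Finset.range (P.m+1), qf P.m k z * (P.p k * (k + P.m - 2 * P.m * z)
      + (1 - P.p k) * (k - 2 * P.m * z)) = qf P.m k z * (P.p k * (k + P.m) + (1 - P.p k) * k)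
      - 2 * P.m * z * qf P.m k z := fun k _ => by ring
  rw [Finset.sum_congr rfl this, Finset.sum_sub_distrib, ← Finset.mul_sum, h1, h2]
  unfold poly at hz
  rw [hz]; ring

theorem poss_up (hX0 : 0 < P.X0) (hY0 : 0 < P.Y0) (z : ℝ) (hz : P.poly z = 0)
    (h0 : 0 < z) (h1 : z < 1) : ∃ i ≤ 2 * P.m, P.Poss i ∧ 2 * P.m * z ≤ i := by
  by_contra! hcon
  have := P.poss_sum z hz
  have hneg : ∑ k ∈ Finset.range (P.m+1), qf P.m k z * (P.p k * (k + P.m - 2 * P.m * z)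
      + (1 - P.p k) * (k - 2 * P.m * z)) < 0 := by
    refine Finset.sum_neg (fun k hk => ?_) ⟨0, by simp⟩
    have hk' : k ≤ P.m := by simpa [Nat.lt_succ_iff] using hk
    refine mul_neg_of_pos_of_neg (qf_pos hk' h0 h1) ?_
    have hp := P.hp k hk'
    have hB : P.p k < 1 → (k:ℝ) - 2 * P.m * z < 0 := fun h => by
      have := hcon k (by omega) (P.possB hX0 hY0 k hk' h); linarith
    have hR : 0 < P.p k → (k:ℝ) + P.m - 2 * P.m * z < 0 := fun h => by
      have := hcon (k + P.m) (by omega) (P.possR hX0 hY0 k hk' h)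
      push_cast at this; linarith
    rcases hp.1.eq_or_lt with h | h
    · rw [← h] at hB ⊢; have := hB (by norm_num); linarith
    · rcases hp.2.eq_or_lt with h' | h'
      · have := hR h; rw [h']; linarith
      · have e1 := hR h; have e2 := hB h'
        nlinarith [mul_neg_of_pos_of_neg h e1, mul_neg_of_pos_of_neg (sub_pos.2 h') e2]
  linarith

theorem poss_down (hX0 : 0 < P.X0) (hY0 : 0 < P.Y0) (z : ℝ) (hz : P.poly z = 0)
    (h0 : 0 < z) (h1 : z < 1) : ∃ i ≤ 2 * P.m, P.Poss i ∧ (i:ℝ) ≤ 2 * P.m * z := by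
  by_contra! hcon
  have := P.poss_sum z hz
  have hneg : 0 < ∑ k ∈ Finset.range (P.m+1), qf P.m k z * (P.p k * (k + P.m - 2 * P.m * z)
      + (1 - P.p k) * (k - 2 * P.m * z)) := by
    refine Finset.sum_pos (fun k hk => ?_) ⟨0, by simp⟩
    have hk' : k ≤ P.m := by simpa [Nat.lt_succ_iff] using hk
    refine mul_pos (qf_pos hk' h0 h1) ?_
    have hp := P.hp k hk'
    have hB : P.p k < 1 → 0 < (k:ℝ) - 2 * P.m * z := fun h => by
      have := hcon k (by omega) (P.possB hX0 hY0 k hk' h); linarith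
    have hR : 0 < P.p k → 0 < (k:ℝ) + P.m - 2 * P.m * z := fun h => by
      have := hcon (k + P.m) (by omega) (P.possR hX0 hY0 k hk' h)
      push_cast at this; linarith
    rcases hp.1.eq_or_lt with h | h
    · rw [← h] at hB ⊢; have := hB (by norm_num); linarith
    · rcases hp.2.eq_or_lt with h' | h'
      · have := hR h; rw [h']; linarith
      · have e1 := hR h; have e2 := hB h'
        nlinarith [mul_pos h e1, mul_pos (sub_pos.2 h') e2]
  linarith

theorem reach (hX0 : 0 < P.X0) (hY0 : 0 < P.Y0) (z : ℝ) (hz : P.poly z = 0)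
    (h0 : 0 < z) (h1 : z < 1) : ∃ C0 : ℝ, ∀ n, P.μ {ω | |(P.X n ω : ℝ) - z * P.S n| ≤ C0} ≠ 0 := by
  have := P.isProb
  obtain ⟨i, hi, pi, hiz⟩ := P.poss_up hX0 hY0 z hz h0 h1
  obtain ⟨j, hj, pj, hjz⟩ := P.poss_down hX0 hY0 z hz h0 h1
  have hi' : (i:ℝ) ≤ 2 * P.m := by exact_mod_cast hi
  have hm0 : (0:ℝ) ≤ P.m := by positivity
  have hmz : 0 ≤ (P.m:ℝ) * z := by positivity
  have hmz' : (P.m:ℝ) * z ≤ P.m := mul_le_of_le_one_right hm0 h1.le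
  have hj0 : (0:ℝ) ≤ j := by positivity
  refine ⟨|(P.X0 : ℝ) - z * P.S 0| + 2 * P.m, fun n => ?_⟩
  set C0 := |(P.X0 : ℝ) - z * P.S 0| + 2 * P.m with hC0
  have hC0' : 2 * (P.m:ℝ) ≤ C0 := by have := abs_nonneg ((P.X0 : ℝ) - z * P.S 0); linarith
  induction n with
  | zero =>
    have : {ω | |(P.X 0 ω : ℝ) - z * P.S 0| ≤ C0} = univ := by
      ext ω
      simp only [mem_ofPred_eq, P.hX0, mem_univ, iff_true, hC0]
      linarith
    rw [this]; simp
  | succ n ih =>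
    have hS : (P.S (n+1) : ℝ) = P.S n + 2 * P.m := by unfold S; push_cast; ring
    have hD : Measurable[P.F n] (fun ω => (P.X n ω : ℝ) - z * P.S n) := by
      have h : Measurable (fun k : ℕ => (k:ℝ) - z * (P.S n : ℝ)) := measurable_from_top
      exact h.comp (P.adaptedX n)
    set E1 := {ω | (P.X n ω : ℝ) - z * P.S n ∈ Icc (-C0) 0}
    set E2 := {ω | (P.X n ω : ℝ) - z * P.S n ∈ Icc 0 C0}
    have hE1 : MeasurableSet[P.F n] E1 := hD measurableSet_Icc
    have hE2 : MeasurableSet[P.F n] E2 := hD measurableSet_Icc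
    have hsub : {ω | |(P.X n ω : ℝ) - z * P.S n| ≤ C0} ⊆ E1 ∪ E2 := by
      intro ω hω
      have := abs_le.1 (show |(P.X n ω : ℝ) - z * P.S n| ≤ C0 from hω)
      rcases le_total ((P.X n ω : ℝ) - z * P.S n) 0 with h | h
      · exact Or.inl ⟨this.1, h⟩
      · exact Or.inr ⟨h, this.2⟩
    have hne : P.μ E1 ≠ 0 ∨ P.μ E2 ≠ 0 := by
      by_contra! hcon
      exact ih (measure_mono_null hsub (measure_union_null hcon.1 hcon.2))
    intro hzero
    rcases hne with h | h
    · refine pi n E1 hE1 h (measure_mono_null ?_ hzero)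
      rintro ω ⟨⟨ha, hb⟩, hc⟩
      have hc' : (P.X (n+1) ω : ℝ) = P.X n ω + i := by exact_mod_cast hc
      show |(P.X (n+1) ω : ℝ) - z * P.S (n+1)| ≤ C0
      rw [hc', hS, abs_le]
      constructor <;> nlinarith
    · refine pj n E2 hE2 h (measure_mono_null ?_ hzero)
      rintro ω ⟨⟨ha, hb⟩, hc⟩
      have hc' : (P.X (n+1) ω : ℝ) = P.X n ω + j := by exact_mod_cast hc
      show |(P.X (n+1) ω : ℝ) - z * P.S (n+1)| ≤ C0
      rw [hc', hS, abs_le]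
      constructor <;> nlinarith

theorem poly_cont : Continuous P.poly := polyP_continuous _ _

theorem meas_poly (n : ℕ) : Measurable[P.F n] (fun ω => P.poly (P.x n ω)) :=
  P.poly_cont.measurable.comp (P.measx n)

theorem poly_abs (n : ℕ) (ω : Ω) : |2 * P.poly (P.x n ω)| ≤ 1 := by
  have h := P.x_mem n ω
  have h2 := polyP_bound P.hm P.p P.hp h.1 h.2
  unfold poly
  rw [abs_le]; constructor <;> linarith

def xi (n : ℕ) (ω : Ω) : ℝ :=
  ((P.X (n+1) ω : ℝ) - P.X n ω) - (2 * P.m * P.poly (P.x n ω) + 2 * P.m * P.x n ω)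

def eta (n : ℕ) (ω : Ω) : ℝ :=
  ((P.A (n+1) ω : ℝ) - P.A n ω) - (2 * P.poly (P.x n ω) + P.x n ω)

theorem meas_castX (n : ℕ) : Measurable[P.F n] (fun ω => (P.X n ω : ℝ)) := by
  have h : Measurable (fun k : ℕ => (k:ℝ)) := measurable_from_top
  exact h.comp (P.adaptedX n)

theorem meas_castA (n : ℕ) : Measurable[P.F n] (fun ω => (P.A n ω : ℝ)) := by
  have h : Measurable (fun k : ℕ => (k:ℝ)) := measurable_from_top
  exact h.comp (P.adaptedA n)

theorem meas_xi (n : ℕ) : Measurable[P.F (n+1)] (P.xi n) := by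
  have hle := P.F.mono (Nat.le_succ n)
  exact ((P.meas_castX (n+1)).sub ((P.meas_castX n).mono hle le_rfl)).sub
    ((((P.meas_poly n).mono hle le_rfl).const_mul _).add (((P.measx n).mono hle le_rfl).const_mul _))

theorem meas_eta (n : ℕ) : Measurable[P.F (n+1)] (P.eta n) := by
  have hle := P.F.mono (Nat.le_succ n)
  exact ((P.meas_castA (n+1)).sub ((P.meas_castA n).mono hle le_rfl)).sub
    ((((P.meas_poly n).mono hle le_rfl).const_mul _).add ((P.measx n).mono hle le_rfl))

theorem cond_zero {Ω : Type} {m' m0 : MeasurableSpace Ω} {μ : Measure[m0] Ω}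
    [IsProbabilityMeasure μ] (hm' : m' ≤ m0) {f g : Ω → ℝ} (hf : Measurable[m0] f) (hg : Measurable[m'] g)
    (K : ℝ) (hfK : ∀ᵐ ω ∂μ, |f ω| ≤ K) (hgK : ∀ ω, |g ω| ≤ K) (h : μ[f|m'] =ᵐ[μ] g) :
    μ[fun ω => f ω - g ω|m'] =ᵐ[μ] 0 := by
  have hfi : Integrable f μ := Integrable.of_bound hf.aestronglyMeasurable K hfK
  have hgi : Integrable g μ := Integrable.of_bound (hg.mono hm' le_rfl).aestronglyMeasurable K
    (ae_of_all _ hgK)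
  have h1 := condExp_sub hfi hgi m'
  rw [condExp_of_stronglyMeasurable hm' hg.stronglyMeasurable hgi] at h1
  refine h1.trans ?_
  filter_upwards [h] with ω h
  simp [h]

theorem cond_xi (n : ℕ) : P.μ[P.xi n | P.F n] =ᵐ[P.μ] 0 := by
  have := P.isProb
  refine cond_zero (P.F.le n) (f := fun ω => (P.X (n+1) ω : ℝ) - P.X n ω)
    (g := fun ω => 2 * P.m * P.poly (P.x n ω) + 2 * P.m * P.x n ω) ?_ ?_ (3 * P.m) ?_ ?_ (P.condX n)
  · exact ((P.meas_castX _).mono (P.F.le _) le_rfl).sub ((P.meas_castX _).mono (P.F.le _) le_rfl)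
  · exact ((P.meas_poly n).const_mul _).add ((P.measx n).const_mul _)
  · filter_upwards [P.ae_bounds] with ω h
    obtain ⟨-, h1, h2⟩ := h n
    have h1' : (P.X n ω : ℝ) ≤ P.X (n+1) ω := by exact_mod_cast h1
    have h2' : (P.X (n+1) ω : ℝ) ≤ P.X n ω + 2 * P.m := by exact_mod_cast h2
    have hm0 : (0:ℝ) ≤ P.m := by positivity
    rw [abs_le]; constructor <;> linarith
  · intro ω
    have h := P.x_mem n ω
    have h2 := abs_le.1 (P.poly_abs n ω)
    have hm0 : (0:ℝ) ≤ P.m := by positivity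
    rw [abs_le]; constructor <;> nlinarith

theorem cond_eta (n : ℕ) : P.μ[P.eta n | P.F n] =ᵐ[P.μ] 0 := by
  have := P.isProb
  refine cond_zero (P.F.le n) (f := fun ω => (P.A (n+1) ω : ℝ) - P.A n ω)
    (g := fun ω => 2 * P.poly (P.x n ω) + P.x n ω) ?_ ?_ 2 ?_ ?_ (P.condA n)
  · exact ((P.meas_castA _).mono (P.F.le _) le_rfl).sub ((P.meas_castA _).mono (P.F.le _) le_rfl)
  · exact ((P.meas_poly n).const_mul _).add (P.measx n)
  · filter_upwards [P.ae_bounds] with ω h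
    obtain ⟨⟨h1, h2⟩, -⟩ := h n
    have h1' : (P.A n ω : ℝ) ≤ P.A (n+1) ω := by exact_mod_cast h1
    have h2' : (P.A (n+1) ω : ℝ) ≤ P.A n ω + 1 := by exact_mod_cast h2
    rw [abs_le]; constructor <;> linarith
  · intro ω
    have h := P.x_mem n ω
    have h2 := abs_le.1 (P.poly_abs n ω)
    rw [abs_le]; constructor <;> linarith

theorem bound_eta : ∀ᵐ ω ∂P.μ, ∀ n, |P.eta n ω| ≤ 1 := by
  filter_upwards [P.ae_bounds] with ω h n
  obtain ⟨⟨h1, h2⟩, -⟩ := h n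
  have h1' : (P.A n ω : ℝ) ≤ P.A (n+1) ω := by exact_mod_cast h1
  have h2' : (P.A (n+1) ω : ℝ) ≤ P.A n ω + 1 := by exact_mod_cast h2
  have h := P.x_mem n ω
  have h3 := polyP_bound P.hm P.p P.hp h.1 h.2
  unfold eta poly
  rw [abs_le]; constructor <;> linarith

theorem bound_xi : ∀ᵐ ω ∂P.μ, ∀ n, |P.xi n ω| ≤ 3 * P.m ∧
    |P.xi n ω + 2 * P.m * P.poly (P.x n ω)| ≤ 3 * P.m := by
  filter_upwards [P.ae_bounds] with ω h n
  obtain ⟨-, h1, h2⟩ := h n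
  have h1' : (P.X n ω : ℝ) ≤ P.X (n+1) ω := by exact_mod_cast h1
  have h2' : (P.X (n+1) ω : ℝ) ≤ P.X n ω + 2 * P.m := by exact_mod_cast h2
  have h := P.x_mem n ω
  have h3 := abs_le.1 (P.poly_abs n ω)
  have hm0 : (0:ℝ) ≤ P.m := by positivity
  unfold xi
  rw [abs_le, abs_le]; refine ⟨⟨?_, ?_⟩, ?_, ?_⟩ <;> nlinarith

theorem not_summable_shift (c : ℕ) : ¬ Summable (fun n : ℕ => 1 / ((n:ℝ) + c)) := by
  have h := (summable_nat_add_iff (f := fun n : ℕ => 1 / (n:ℝ)) c).not.2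
    Real.not_summable_one_div_natCast
  simpa using h

theorem summable_shift (c : ℕ) : Summable (fun n : ℕ => (1 / ((n:ℝ) + c))^2) := by
  have h := (summable_nat_add_iff (f := fun n : ℕ => 1 / (n:ℝ)^2) c).2
    (Real.summable_one_div_nat_pow.2 (by norm_num))
  simpa using h

theorem eta_avg : ∀ᵐ ω ∂P.μ, Tendsto (fun n : ℕ => (∑ j ∈ Finset.range n, P.eta j ω) / (n + 1))
    atTop (nhds 0) := by
  have := P.isProb
  set Q := ∑' n : ℕ, (1 / ((n:ℝ) + (2:ℕ)))^2
  have hQ : 0 ≤ Q := tsum_nonneg fun n => sq_nonneg _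
  have hyb : ∀ᵐ ω ∂P.μ, ∀ n : ℕ, |(∑ j ∈ Finset.range n, P.eta j ω) / ((n:ℝ) + 1)| ≤ 1 := by
    filter_upwards [P.bound_eta] with ω h n
    rw [abs_div, abs_of_pos (show (0:ℝ) < n + 1 by positivity), div_le_one (by positivity)]
    calc _ ≤ ∑ j ∈ Finset.range n, |P.eta j ω| := Finset.abs_sum_le_sum_abs _ _
      _ ≤ ∑ j ∈ Finset.range n, 1 := Finset.sum_le_sum fun j _ => h j
      _ ≤ _ := by simp
  have key := (sa_main P.μ P.F (fun n ω => (∑ j ∈ Finset.range n, P.eta j ω) / (n + 1)) P.eta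
    (fun n => 1 / ((n:ℝ) + (2:ℕ))) (fun u => -u) 0 (4 * Q + 2) 2 Q univ (by positivity)
    (fun n => by
      refine Measurable.div_const ?_ _
      refine Finset.measurable_fun_sum _ fun j hj => ?_
      exact (P.meas_eta j).mono (P.F.mono (Finset.mem_range.1 hj)) le_rfl)
    P.meas_eta continuous_neg (fun n => by positivity)
    (fun n => by
      rw [div_le_one (by positivity)]; push_cast; have : (0:ℝ) ≤ n := by positivity
      linarith)
    (not_summable_shift 2) (fun n => (summable_shift 2).sum_le_tsum _ fun i _ => sq_nonneg _)
    (fun n ω => by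
      rw [Finset.sum_range_succ]; push_cast
      field_simp; ring)
    (by
      filter_upwards [P.bound_eta, hyb] with ω h h' n
      have h1 := abs_le.1 (h n)
      have h2 := abs_le.1 (h' n)
      refine ⟨(h n).trans (by norm_num), ?_⟩
      rw [abs_le]; constructor <;> linarith)
    P.cond_eta
    (fun u _ hu => by
      have : 0 < u^2 := by positivity
      nlinarith)
    MeasurableSet.univ
    (fun ω _ => by simp; nlinarith)).1
  filter_upwards [key, hyb] with ω h h'
  exact h (mem_univ _) fun n => by
    rw [sub_zero]
    exact (h' n).trans (by linarith)

theorem a_tendsto {z : ℝ} (hz : P.poly z = 0) {ω : Ω}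
    (hx : Tendsto (fun n => P.x n ω) atTop (nhds z))
    (he : Tendsto (fun n : ℕ => (∑ j ∈ Finset.range n, P.eta j ω) / (n + 1)) atTop (nhds 0)) :
    Tendsto (fun n => P.a n ω) atTop (nhds z) := by
  have hg : Tendsto (fun n => 2 * P.poly (P.x n ω) + P.x n ω) atTop (nhds z) := by
    have := (((P.poly_cont.tendsto z).comp hx).const_mul 2).add hx
    simpa [hz] using this
  have hA : ∀ n, (P.A n ω : ℝ) = P.A0 + ∑ j ∈ Finset.range n, P.eta j ω
      + ∑ j ∈ Finset.range n, (2 * P.poly (P.x j ω) + P.x j ω) := by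
    intro n
    induction n with
    | zero => simp [P.hA0]
    | succ n ih =>
      rw [Finset.sum_range_succ, Finset.sum_range_succ]
      unfold eta at *
      linarith
  set c : ℝ := (P.A0 : ℝ) + P.B0
  have hc : 0 ≤ c := by positivity
  have t1 : Tendsto (fun n : ℕ => (n:ℝ) / (n + c)) atTop (nhds 1) :=
    tendsto_natCast_div_add_atTop c
  have t2 : Tendsto (fun n : ℕ => ((n:ℝ) + c)⁻¹) atTop (nhds 0) :=
    (tendsto_natCast_atTop_atTop.atTop_add tendsto_const_nhds).inv_tendsto_atTop
  have t := ((t2.const_mul (P.A0 : ℝ)).add (he.mul (t1.add t2))).add (hg.cesaro.mul t1)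
  have t' : Tendsto (fun n : ℕ => (P.A0:ℝ) * ((n:ℝ) + c)⁻¹ +
      (∑ j ∈ Finset.range n, P.eta j ω) / (n + 1) * ((n:ℝ) / (n + c) + ((n:ℝ) + c)⁻¹) +
      (n:ℝ)⁻¹ * ∑ j ∈ Finset.range n, (2 * P.poly (P.x j ω) + P.x j ω) * ((n:ℝ) / (n + c)))
      atTop (nhds z) := by
    simpa [Finset.sum_mul, mul_assoc, Finset.mul_sum] using t
  refine t'.congr' ?_
  filter_upwards [eventually_ge_atTop 1] with n hn
  have hn' : (0:ℝ) < n := by exact_mod_cast hn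
  have hnc : (0:ℝ) < n + c := by positivity
  rw [← Finset.sum_mul]
  unfold a
  rw [hA, show (P.A0 : ℝ) + P.B0 + n = n + c by ring]
  field_simp

end PAProcess

/-- **Nonlinear models, stable equilibria.** In a nonlinear model with `X_0, Y_0 > 0`, if
`z ∈ Z_P ∩ (0,1)` is a stable zero, i.e. there is `ε > 0` with `P > 0` on `(z−ε, z)` and
`P < 0` on `(z, z+ε)`, then `a_n → z` with positive probability. -/
theorem nonlinear_model_stable_equilibrium
    {Ω : Type} [MeasurableSpace Ω] (P : PAProcess Ω)
    (hnonlin : ∃ k ≤ P.m, P.p k ≠ (k : ℝ) / P.m)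
    (hX0 : 0 < P.X0) (hY0 : 0 < P.Y0)
    (z : ℝ) (hz : z ∈ P.Zp ∩ Set.Ioo (0 : ℝ) 1)
    (ε : ℝ) (hε : 0 < ε)
    (hpos : ∀ y ∈ Set.Ioo (z - ε) z, 0 < P.poly y)
    (hneg : ∀ y ∈ Set.Ioo z (z + ε), P.poly y < 0) :
    0 < P.μ {ω | Tendsto (fun n => P.a n ω) atTop (nhds z)} := by
  have := P.isProb
  obtain ⟨⟨-, hz0⟩, hzp, hz1⟩ := hz
  have hz0 : P.poly z = 0 := hz0
  obtain ⟨C0, hreach⟩ := P.reach hX0 hY0 z hz0 hzp hz1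
  have hm1 : (1:ℝ) ≤ P.m := by exact_mod_cast P.hm
  have hSval : ∀ n, (P.S n : ℝ) = (P.X0 : ℝ) + P.Y0 + 2 * P.m * n := P.S_cast
  have hSp : ∀ n, (0:ℝ) < P.S n := P.S_pos hX0
  have hX0' : (0:ℝ) < P.X0 := by exact_mod_cast hX0
  have hY0' : (0:ℝ) < P.Y0 := by exact_mod_cast hY0
  have hSge : ∀ n : ℕ, (n:ℝ) ≤ P.S n := by
    intro n
    rw [hSval]
    have : (0:ℝ) ≤ n := by positivity
    nlinarith
  let γ : ℕ → ℝ := fun n => 1 / (P.S (n+1) : ℝ)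
  have hγ0 : ∀ n, 0 < γ n := fun n => one_div_pos.2 (hSp _)
  have hγle : ∀ n, γ n ≤ 1 / ((n:ℝ) + (1:ℕ)) := by
    intro n
    refine one_div_le_one_div_of_le (by positivity) ?_
    have := hSge (n+1)
    push_cast at this ⊢; linarith
  have hγ1 : ∀ n, γ n ≤ 1 := by
    intro n
    refine (hγle n).trans ?_
    rw [div_le_one (by positivity)]; push_cast; have : (0:ℝ) ≤ n := by positivity
    linarith
  have hγ2 : Summable (fun n => (γ n)^2) :=
    Summable.of_nonneg_of_le (fun n => sq_nonneg _)
      (fun n => pow_le_pow_left₀ (hγ0 n).le (hγle n) 2) (PAProcess.summable_shift 1)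
  have hγs : ¬ Summable γ := by
    intro h
    refine PAProcess.not_summable_shift 1
      (Summable.of_nonneg_of_le (fun n => by positivity) (fun n => ?_)
        (h.mul_left ((P.X0 : ℝ) + P.Y0 + 2 * P.m)))
    simp only [γ]
    rw [mul_one_div, div_le_div_iff₀ (by positivity) (hSp _), hSval]
    push_cast
    have : (0:ℝ) ≤ n := by positivity
    nlinarith
  -- choice of N
  have hlim1 : Tendsto (fun N => ∑' n, (γ (n + N))^2) atTop (nhds 0) :=
    tendsto_sum_nat_add (fun n => (γ n)^2)
  have hlim2 : Tendsto (fun N => C0 / (P.S N : ℝ)) atTop (nhds 0) :=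
    tendsto_const_nhds.div_atTop (tendsto_atTop_mono hSge tendsto_natCast_atTop_atTop)
  have hlim3 : Tendsto (fun N => (C0 / (P.S N : ℝ))^2 + (3 * (P.m:ℝ))^2 * ∑' n, (γ (n + N))^2) atTop
      (nhds 0) := by
    simpa using (hlim2.pow 2).add (hlim1.const_mul ((3 * (P.m:ℝ))^2))
  obtain ⟨N, hN⟩ := (hlim3.eventually (gt_mem_nhds
    (show (0:ℝ) < (ε/2)^2/2 by positivity))).exists
  let F' : Filtration ℕ ‹MeasurableSpace Ω› :=
    ⟨fun n => P.F (n + N), fun i j hij => P.F.mono (by omega), fun n => P.F.le _⟩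
  let E : Set Ω := {ω | |(P.X N ω : ℝ) - z * P.S N| ≤ C0}
  have hEm : MeasurableSet[P.F N] E :=
    (continuous_abs.measurable.comp ((P.meas_castX N).sub_const _)) measurableSet_Iic
  have hmain := sa_main P.μ F' (fun n => P.x (n + N)) (fun n => P.xi (n + N)) (fun n => γ (n + N))
    (fun u => 2 * P.m * P.poly u) z (ε/2) (3 * P.m) (∑' n, (γ (n + N))^2) E (by positivity)
    (fun n => P.measx _)
    (fun n => by
      have := P.meas_xi (n + N)
      rw [show n + N + 1 = n + 1 + N by ring] at this
      exact this)
    (P.poly_cont.const_mul _) (fun n => hγ0 _) (fun n => hγ1 _)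
    ((summable_nat_add_iff N).not.2 hγs)
    (fun n => ((summable_nat_add_iff N).2 hγ2).sum_le_tsum _ fun i _ => sq_nonneg _)
    (fun n ω => by
      show P.x (n + 1 + N) ω = _
      rw [show n + 1 + N = n + N + 1 by ring]
      set k := n + N
      have h1 := hSp k
      have h2 := hSp (k+1)
      have hS : (P.S (k+1) : ℝ) = P.S k + 2 * P.m := by rw [hSval, hSval]; push_cast; ring
      have hx : P.x k ω * P.S k = P.X k ω := by unfold PAProcess.x; field_simp
      have hx' : P.x (k+1) ω * P.S (k+1) = P.X (k+1) ω := by unfold PAProcess.x; field_simp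
      refine mul_right_cancel₀ h2.ne' ?_
      rw [hx', add_mul]
      simp only [γ, PAProcess.xi]
      rw [mul_comm (1 / (P.S (k+1) : ℝ)), mul_assoc, one_div_mul_cancel h2.ne', mul_one, hS]
      linear_combination (-1 : ℝ) * hx)
    (by
      filter_upwards [P.bound_xi] with ω h n
      exact h _)
    (fun n => P.cond_xi _)
    (fun u hu hne => by
      have hu' := abs_le.1 hu
      rcases lt_or_gt_of_ne hne with h | h
      · have := hpos u ⟨by linarith, h⟩
        refine mul_neg_of_neg_of_pos (by linarith) (by positivity)
      · have := hneg u ⟨h, by linarith⟩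
        refine mul_neg_of_pos_of_neg (by linarith) (mul_neg_of_pos_of_neg (by positivity) this))
    (by
      show MeasurableSet[P.F (0 + N)] E
      rw [zero_add]; exact hEm)
    (fun ω hω => by
      have hω : |(P.X N ω : ℝ) - z * P.S N| ≤ C0 := hω
      simp only [zero_add]
      have h1 := hSp N
      have h2 : (P.x N ω - z)^2 ≤ (C0 / (P.S N : ℝ))^2 := by
        rw [← sq_abs]
        refine pow_le_pow_left₀ (abs_nonneg _) ?_ 2
        have : P.x N ω - z = ((P.X N ω : ℝ) - z * P.S N) / P.S N := by
          unfold PAProcess.x; field_simp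
        rw [this, abs_div, abs_of_pos h1]
        gcongr
      linarith)
  obtain ⟨hconv, hposm⟩ := hmain
  have hG := hposm (hreach N)
  refine pos_iff_ne_zero.2 fun h0 => hG ?_
  have hae : ∀ᵐ ω ∂P.μ, ω ∉ {ω | ω ∈ E ∧ ∀ n, |P.x (n + N) ω - z| ≤ ε/2} := by
    have h0' : ∀ᵐ ω ∂P.μ, ¬ Tendsto (fun n => P.a n ω) atTop (nhds z) := by
      rw [ae_iff]; simpa using h0
    filter_upwards [hconv, P.eta_avg, h0'] with ω h1 h2 h3 h4
    exact h3 (P.a_tendsto hz0 ((tendsto_add_atTop_iff_nat N).1 (h1 h4.1 h4.2)) h2)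
  rw [ae_iff] at hae
  simpa using hae
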